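/- (Lower bound via context richness.) Assume E_μ[ρ²·Rmax²] < ∞, let γ ∈ [0,1] and δ ∈ (0,1], set ξ(x,a) = 1(P_μ({(x,a)}) ≤ γ) and γ' = max{γ, δ}. Then there exist measurable functions R̂, ρ̂ : X×A → [0,∞) with R̂(x,a)² ≤ Rmax(x,a)² ≤ (1+δ)·R̂(x,a)² and ρ̂(x,a)² ≤ ρ(x,a)² ≤ (1+δ)·ρ̂(x,a)² for all (x,a), such that the minimax risk satisfies R_n ≥ ( E_μ[ξ·ρ̂²·R̂²] / (32·e·n) ) · ( 1 − E_μ[ ξ·ρ̂²·R̂² · 1( ξ·ρ̂·R̂ > √(n·E_μ[ξ·ρ̂²·R̂²]/16) ) ] / E_μ[ξ·ρ̂²·R̂²] )² − γ'·log(5/γ')·(1+δ)·E_μ[ξ·ρ̂²·R̂²]. -/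

import Mathlib

open MeasureTheory ProbabilityTheory Real
open scoped ENNReal BigOperators Classical

/-- A policy assigns to each context a probability mass function over actions. -/
structure Policy (X A : Type*) [MeasurableSpace X] [Fintype A] where
  prob : X → A → ℝ
  nonneg : ∀ x a, 0 ≤ prob x a
  sum_one : ∀ x, ∑ a, prob x a = 1
  meas : ∀ a, Measurable fun x => prob x a

variable {X A : Type*} [MeasurableSpace X] [Fintype A] [Nonempty A]
  [MeasurableSpace A] [MeasurableSingletonClass A]

/-- Importance weight ρ(x,a) = π(a|x)/μ(a|x). -/
noncomputable def impW (μp πp : Policy X A) (p : X × A) : ℝ :=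
  πp.prob p.1 p.2 / μp.prob p.1 p.2

/-- E_μ[f] : expectation of f(x,a) for x ∼ λ, a ∼ μ(·|x). -/
noncomputable def Emu (lam : Measure X) (μp : Policy X A) (f : X × A → ℝ) : ℝ :=
  ∫ x, ∑ a, μp.prob x a * f (x, a) ∂lam

/-- The distribution P_μ of (x,a) with x ∼ λ, a ∼ μ(·|x). -/
noncomputable def Policy.joint (lam : Measure X) (μp : Policy X A) : Measure (X × A) :=
  lam.bind fun x => Measure.sum fun a : A => ENNReal.ofReal (μp.prob x a) • Measure.dirac (x, a)

/-- Mean reward r*(x,a) of a reward kernel. -/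
noncomputable def rstar (D : Kernel (X × A) ℝ) (p : X × A) : ℝ := ∫ r, r ∂(D p)

/-- The value of the target policy π. -/
noncomputable def vpi (lam : Measure X) (πp : Policy X A) (D : Kernel (X × A) ℝ) : ℝ :=
  ∫ x, ∑ a, πp.prob x a * rstar D (x, a) ∂lam

/-- The joint distribution P_μ^D of ((x,a),r): x ∼ λ, a ∼ μ(·|x), r ∼ D(·|x,a). -/
noncomputable def sampleMeasure (lam : Measure X) (μp : Policy X A) (D : Kernel (X × A) ℝ) :
    Measure ((X × A) × ℝ) :=
  (Policy.joint lam μp).bind fun p => (D p).map fun r => (p, r)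

/-- The class R(σ,Rmax) of reward kernels: Markov kernels with finite second moments such
that P_μ-a.s. 0 ≤ r*(x,a) ≤ Rmax(x,a) and Var(r|x,a) ≤ σ(x,a)². -/
def InRewardClass (lam : Measure X) (μp : Policy X A) (σf Rmax : X × A → ℝ)
    (D : Kernel (X × A) ℝ) : Prop :=
  IsMarkovKernel D ∧ (∀ p, Integrable (fun r => r ^ 2) (D p)) ∧
    (∀ᵐ p ∂Policy.joint lam μp,
      0 ≤ rstar D p ∧ rstar D p ≤ Rmax p ∧ variance id (D p) ≤ σf p ^ 2)

/-- Minimax risk of off-policy evaluation from n i.i.d. samples. -/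
noncomputable def minimaxRisk (lam : Measure X) (μp πp : Policy X A)
    (σf Rmax : X × A → ℝ) (n : ℕ) : ℝ≥0∞ :=
  ⨅ (vhat : (Fin n → (X × A) × ℝ) → ℝ) (_ : Measurable vhat),
    ⨆ (D : Kernel (X × A) ℝ) (_ : InRewardClass lam μp σf Rmax D),
      ∫⁻ ω, ENNReal.ofReal ((vhat ω - vpi lam πp D) ^ 2)
        ∂(Measure.pi fun _ : Fin n => sampleMeasure lam μp D)


lemma cr_sum_prod {J : Type*} [Fintype J] [DecidableEq J] (u : J → Bool → ℝ) :
    ∑ ω : J → Bool, ∏ j, u j (ω j) = ∏ j, (u j true + u j false) := by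
  rw [← Fintype.piFinset_univ, ← Finset.prod_univ_sum]
  simp

/-- Bernoulli weights. -/
noncomputable def crw (q : ℝ) (b : Bool) : ℝ := if b then q else 1 - q

noncomputable def crb (b : Bool) : ℝ := if b then 1 else 0

lemma cr_sum_w {J : Type*} [Fintype J] [DecidableEq J] (q : J → ℝ) :
    ∑ ω : J → Bool, ∏ j, crw (q j) (ω j) = 1 := by
  rw [cr_sum_prod]; simp [crw]

lemma cr_w_nonneg {J : Type*} [Fintype J] [DecidableEq J] (q : J → ℝ) (h : ∀ j, 0 ≤ q j ∧ q j ≤ 1) (ω : J → Bool) :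
    0 ≤ ∏ j, crw (q j) (ω j) := by
  apply Finset.prod_nonneg
  intro j _
  unfold crw
  split_ifs <;> linarith [(h j).1, (h j).2]

lemma cr_cov {J : Type*} [Fintype J] [DecidableEq J] (q : J → ℝ) (i k : J) :
    ∑ ω : J → Bool, (∏ j, crw (q j) (ω j)) * ((crb (ω i) - q i) * (crb (ω k) - q k))
      = if i = k then q i * (1 - q i) else 0 := by
  have h : ∀ ω : J → Bool, (∏ j, crw (q j) (ω j)) * ((crb (ω i) - q i) * (crb (ω k) - q k))
      = ∏ j, (crw (q j) (ω j) * ((if j = i then crb (ω j) - q j else 1) *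
        (if j = k then crb (ω j) - q j else 1))) := by
    intro ω
    rw [Finset.prod_mul_distrib, Finset.prod_mul_distrib]
    simp
  simp_rw [h]
  rw [cr_sum_prod (fun j b => crw (q j) b * ((if j = i then crb b - q j else 1) *
        (if j = k then crb b - q j else 1)))]
  split_ifs with hik
  · subst hik
    rw [Finset.prod_eq_single i]
    · simp [crw, crb]; ring
    · intro j _ hj; simp [hj, crw]
    · simp
  · apply Finset.prod_eq_zero (Finset.mem_univ i)
    simp [hik, crw, crb]; ring

lemma cr_var {J : Type*} [Fintype J] [DecidableEq J] (q a : J → ℝ) :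
    ∑ ω : J → Bool, (∏ j, crw (q j) (ω j)) * (∑ j, a j * crb (ω j) - ∑ j, a j * q j) ^ 2
      ≤ 1 / 4 * ∑ j, a j ^ 2 := by
  have h : ∀ ω : J → Bool, (∏ j, crw (q j) (ω j)) * (∑ j, a j * crb (ω j) - ∑ j, a j * q j) ^ 2
      = ∑ i, ∑ k, a i * a k *
        ((∏ j, crw (q j) (ω j)) * ((crb (ω i) - q i) * (crb (ω k) - q k))) := by
    intro ω
    rw [← Finset.sum_sub_distrib, sq, Finset.sum_mul_sum, Finset.mul_sum]
    refine Finset.sum_congr rfl fun i _ => ?_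
    rw [Finset.mul_sum]
    refine Finset.sum_congr rfl fun k _ => ?_
    ring
  simp_rw [h]
  rw [Finset.sum_comm, Finset.mul_sum]
  refine Finset.sum_le_sum fun i _ => ?_
  rw [Finset.sum_comm]
  simp_rw [← Finset.mul_sum, cr_cov]
  simp
  nlinarith [sq_nonneg (a i * (q i - 1/2))]

lemma cr_two_point {K : Type*} [Fintype K] (p q ψ : K → ℝ) (hp : ∀ k, 0 ≤ p k) (hq : ∀ k, 0 ≤ q k)
    (sp : ∑ k, p k = 1) (sq' : ∑ k, q k = 1) (a b : ℝ) :
    (b - a) ^ 2 * (∑ k, √(p k) * √(q k)) ^ 2 ≤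
      2 * (∑ k, p k * (ψ k - a) ^ 2 + ∑ k, q k * (ψ k - b) ^ 2) := by
  have e : (b - a) * (∑ k, √(p k) * √(q k)) =
      ∑ k, √(q k) * (√(p k) * (ψ k - a)) + ∑ k, √(p k) * (√(q k) * (b - ψ k)) := by
    rw [← Finset.sum_add_distrib, Finset.mul_sum]
    refine Finset.sum_congr rfl fun k _ => ?_
    ring
  have h1 := Finset.sum_mul_sq_le_sq_mul_sq Finset.univ (fun k => √(q k))
    (fun k => √(p k) * (ψ k - a))
  have h2 := Finset.sum_mul_sq_le_sq_mul_sq Finset.univ (fun k => √(p k))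
    (fun k => √(q k) * (b - ψ k))
  simp only [mul_pow, Real.sq_sqrt (hp _), Real.sq_sqrt (hq _), sp, sq', one_mul] at h1 h2
  rw [← mul_pow, e]
  have h3 : ∀ k, (b - ψ k) ^ 2 = (ψ k - b) ^ 2 := fun k => by ring
  simp_rw [h3] at h2
  nlinarith [add_sq_le (a := ∑ k, √(q k) * (√(p k) * (ψ k - a))) (b := ∑ k, √(p k) * (√(q k) * (b - ψ k)))]

lemma cr_marg {J : Type*} [Fintype J] [DecidableEq J] (S : Finset J) (u : J → Bool → ℝ)
    (hu : ∀ j, u j true + u j false = 1) (φ : (J → Bool) → ℝ)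
    (hφ : ∀ ω ω', (∀ j ∈ S, ω j = ω' j) → φ ω = φ ω') :
    ∑ ω : J → Bool, (∏ j, u j (ω j)) * φ ω =
      ∑ α : {j // j ∈ S} → Bool, (∏ j : {j // j ∈ S}, u j (α j)) *
        φ (fun j => if h : j ∈ S then α ⟨j, h⟩ else false) := by
  rw [← (Equiv.piEquivPiSubtypeProd (fun j => j ∈ S) (fun _ => Bool)).symm.sum_comp,
    Fintype.sum_prod_type]
  refine Finset.sum_congr rfl fun α _ => ?_
  have h1 : ∀ β : {j // j ∉ S} → Bool, 
    (∏ j, u j ((Equiv.piEquivPiSubtypeProd (fun j => j ∈ S) (fun _ => Bool)).symm (α, β) j)) *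
      φ ((Equiv.piEquivPiSubtypeProd (fun j => j ∈ S) (fun _ => Bool)).symm (α, β))
    = ((∏ j : {j // j ∈ S}, u j (α j)) *
        φ (fun j => if h : j ∈ S then α ⟨j, h⟩ else false)) * ∏ j : {j // j ∉ S}, u j (β j) := by
    intro β
    have hsp : ∀ F : J → ℝ, ∏ j, F j = (∏ j : {j // j ∈ S}, F j) * ∏ j : {j // j ∉ S}, F j := by
      intro F
      rw [← Fintype.prod_subtype_mul_prod_subtype (fun j => j ∈ S)]
      congr!
    rw [hsp]
    have e1 : ∀ j : {j // j ∈ S}, (Equiv.piEquivPiSubtypeProd (fun j => j ∈ S) (fun _ => Bool)).symm (α, β) j = α j := by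
      intro j; simp [Equiv.piEquivPiSubtypeProd]
    have e2 : ∀ j : {j // j ∉ S}, (Equiv.piEquivPiSubtypeProd (fun j => j ∈ S) (fun _ => Bool)).symm (α, β) j = β j := by
      intro j; simp [Equiv.piEquivPiSubtypeProd, j.2]
    simp_rw [e1, e2]
    rw [hφ _ (fun j => if h : j ∈ S then α ⟨j, h⟩ else false)]
    · ring
    · intro j hj; simp [hj, Equiv.piEquivPiSubtypeProd]
  simp_rw [h1]
  rw [← Finset.mul_sum, cr_sum_prod (fun (j : {j // j ∉ S}) b => u j b)]
  simp [hu]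

lemma cr_prod_ge {J : Type*} (S : Finset J) (s : J → ℝ) (hs : ∀ j, 0 ≤ s j ∧ s j ≤ 1) :
    1 - ∑ j ∈ S, s j ≤ ∏ j ∈ S, (1 - s j) := by
  induction S using Finset.induction_on with
  | empty => simp
  | insert j S hj ih =>
    rw [Finset.sum_insert hj, Finset.prod_insert hj]
    have : 0 ≤ ∑ j ∈ S, s j := Finset.sum_nonneg fun j _ => (hs j).1
    nlinarith [(hs j).1, (hs j).2, mul_le_mul_of_nonneg_left ih (sub_nonneg.2 (hs j).2), mul_nonneg (hs j).1 this]

lemma cr_pointwise {J : Type*} [Fintype J] [DecidableEq J] (S : Finset J) (t a : J → ℝ)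
    (ht : ∀ j, 0 ≤ t j ∧ t j ≤ 1) (φ : (J → Bool) → ℝ)
    (hφ : ∀ ω ω', (∀ j ∈ S, ω j = ω' j) → φ ω = φ ω') :
    (∑ j, a j * t j) ^ 2 / 8 * (1 - ∑ j ∈ S, t j ^ 2) - 1 / 4 * ∑ j, a j ^ 2 ≤
    ∑ ω : J → Bool, ((∏ j, crw ((1 - t j) / 2) (ω j)) + (∏ j, crw ((1 + t j) / 2) (ω j))) / 2 *
      (φ ω - ∑ j, a j * crb (ω j)) ^ 2 := by
  set q0 : J → ℝ := fun j => (1 - t j) / 2 with hq0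
  set q1 : J → ℝ := fun j => (1 + t j) / 2 with hq1
  have b0 : ∀ j, 0 ≤ q0 j ∧ q0 j ≤ 1 := fun j => by
    constructor <;> simp only [hq0] <;> linarith [(ht j).1, (ht j).2]
  have b1 : ∀ j, 0 ≤ q1 j ∧ q1 j ≤ 1 := fun j => by
    constructor <;> simp only [hq1] <;> linarith [(ht j).1, (ht j).2]
  have key : ∀ q : J → ℝ, (∀ j, 0 ≤ q j ∧ q j ≤ 1) →
      1 / 2 * ∑ ω : J → Bool, (∏ j, crw (q j) (ω j)) * (φ ω - ∑ j, a j * q j) ^ 2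
        - 1 / 4 * ∑ j, a j ^ 2 ≤
      ∑ ω : J → Bool, (∏ j, crw (q j) (ω j)) * (φ ω - ∑ j, a j * crb (ω j)) ^ 2 := by
    intro q hq
    have h1 := cr_var q a
    have h2 : 1 / 2 * ∑ ω : J → Bool, (∏ j, crw (q j) (ω j)) * (φ ω - ∑ j, a j * q j) ^ 2 ≤
      ∑ ω : J → Bool, (∏ j, crw (q j) (ω j)) * (φ ω - ∑ j, a j * crb (ω j)) ^ 2 +
      ∑ ω : J → Bool, (∏ j, crw (q j) (ω j)) * (∑ j, a j * crb (ω j) - ∑ j, a j * q j) ^ 2 := by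
      rw [← Finset.sum_add_distrib, Finset.mul_sum]
      refine Finset.sum_le_sum fun ω _ => ?_
      have hw := cr_w_nonneg q hq ω
      rw [← mul_add, mul_left_comm]
      apply mul_le_mul_of_nonneg_left _ hw
      nlinarith [sq_nonneg ((φ ω - ∑ j, a j * crb (ω j)) - (∑ j, a j * crb (ω j) - ∑ j, a j * q j))]
    linarith
  have k0 := key q0 b0
  have k1 := key q1 b1
  have hm : ∀ q : J → ℝ, ∀ v : ℝ, 
      ∑ ω : J → Bool, (∏ j, crw (q j) (ω j)) * (φ ω - v) ^ 2 =
      ∑ α : {j // j ∈ S} → Bool, (∏ j : {j // j ∈ S}, crw (q j) (α j)) *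
        (φ (fun j => if h : j ∈ S then α ⟨j, h⟩ else false) - v) ^ 2 := by
    intro q v
    exact cr_marg S (fun j b => crw (q j) b) (by simp [crw]) (fun ω => (φ ω - v) ^ 2)
      (fun ω ω' h => by simp only [hφ ω ω' h])
  rw [hm] at k0 k1
  have tp := cr_two_point (fun α : {j // j ∈ S} → Bool => ∏ j : {j // j ∈ S}, crw (q0 j) (α j))
    (fun α : {j // j ∈ S} → Bool => ∏ j : {j // j ∈ S}, crw (q1 j) (α j))
    (fun α => φ (fun j => if h : j ∈ S then α ⟨j, h⟩ else false))
    (fun α => cr_w_nonneg (fun j : {j // j ∈ S} => q0 j) (fun j => b0 j) α)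
    (fun α => cr_w_nonneg (fun j : {j // j ∈ S} => q1 j) (fun j => b1 j) α)
    (cr_sum_w _) (cr_sum_w _) (∑ j, a j * q0 j) (∑ j, a j * q1 j)
  have hd : ∑ j, a j * q1 j - ∑ j, a j * q0 j = ∑ j, a j * t j := by
    rw [← Finset.sum_sub_distrib]
    refine Finset.sum_congr rfl fun j _ => ?_
    simp only [hq0, hq1]; ring
  have hA : (∑ α : {j // j ∈ S} → Bool, √(∏ j : {j // j ∈ S}, crw (q0 j) (α j)) *
      √(∏ j : {j // j ∈ S}, crw (q1 j) (α j))) ^ 2 = ∏ j ∈ S, (1 - t j ^ 2) := by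
    have e : ∀ α : {j // j ∈ S} → Bool, √(∏ j : {j // j ∈ S}, crw (q0 j) (α j)) *
      √(∏ j : {j // j ∈ S}, crw (q1 j) (α j)) = ∏ j : {j // j ∈ S}, (√(1 - t j ^ 2) / 2) := by
      intro α
      rw [← Real.sqrt_mul (cr_w_nonneg (fun j : {j // j ∈ S} => q0 j) (fun j => b0 j) α),
        ← Finset.prod_mul_distrib]
      have : ∀ j : {j // j ∈ S}, crw (q0 j) (α j) * crw (q1 j) (α j) = (√(1 - t j ^ 2) / 2) ^ 2 := by
        intro j
        rw [div_pow, Real.sq_sqrt (by nlinarith [(ht j).1, (ht j).2])]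
        unfold crw
        simp only [hq0, hq1]
        split_ifs <;> ring
      simp_rw [this]
      rw [Finset.prod_pow, Real.sqrt_sq]
      exact Finset.prod_nonneg fun j _ => by positivity
    simp_rw [e]
    rw [cr_sum_prod (fun (j : {j // j ∈ S}) _ => √(1 - t j ^ 2) / 2)]
    simp_rw [add_halves]
    rw [← Finset.prod_pow, ← Finset.prod_coe_sort S]
    refine Finset.prod_congr rfl fun j _ => ?_
    rw [Real.sq_sqrt (by nlinarith [(ht j).1, (ht j).2])]
  rw [hd, hA] at tp
  have hB := cr_prod_ge S (fun j => t j ^ 2) (fun j => ⟨sq_nonneg _, by nlinarith [(ht j).1, (ht j).2]⟩)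
  have hC := mul_le_mul_of_nonneg_left hB (sq_nonneg (∑ j, a j * t j))
  have hsplit : ∑ ω : J → Bool, ((∏ j, crw (q0 j) (ω j)) + (∏ j, crw (q1 j) (ω j))) / 2 *
      (φ ω - ∑ j, a j * crb (ω j)) ^ 2 = 
      (∑ ω : J → Bool, (∏ j, crw (q0 j) (ω j)) * (φ ω - ∑ j, a j * crb (ω j)) ^ 2 +
      ∑ ω : J → Bool, (∏ j, crw (q1 j) (ω j)) * (φ ω - ∑ j, a j * crb (ω j)) ^ 2) / 2 := by
    rw [← Finset.sum_add_distrib, Finset.sum_div]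
    refine Finset.sum_congr rfl fun j _ => ?_
    ring
  change _ ≤ ∑ ω : J → Bool, ((∏ j, crw (q0 j) (ω j)) + (∏ j, crw (q1 j) (ω j))) / 2 *
      (φ ω - ∑ j, a j * crb (ω j)) ^ 2
  rw [hsplit]
  linarith

lemma cr_sum_image_le {J ι : Type*} [DecidableEq J] [Fintype ι] (g : ι → J) (s : J → ℝ)
    (hs : ∀ j, 0 ≤ s j) : ∑ j ∈ Finset.univ.image g, s j ≤ ∑ i, s (g i) := by
  rw [← Finset.sum_fiberwise_of_maps_to (s := Finset.univ) (t := Finset.univ.image g) (g := g)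
    (fun i hi => Finset.mem_image_of_mem g hi) (fun i => s (g i))]
  refine Finset.sum_le_sum fun j hj => ?_
  obtain ⟨i, -, rfl⟩ := Finset.mem_image.1 hj
  exact Finset.single_le_sum (f := fun i => s (g i)) (fun i _ => hs _) (by simp)

lemma cr_ofReal_integral_le {Ω : Type*} [MeasurableSpace Ω] (m : Measure Ω) (g : Ω → ℝ)
    (hg : Integrable g m) : ENNReal.ofReal (∫ x, g x ∂m) ≤ ∫⁻ x, ENNReal.ofReal (g x) ∂m := by
  apply ENNReal.ofReal_le_of_le_toReal
  rw [integral_eq_lintegral_pos_part_sub_lintegral_neg_part hg]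
  linarith [ENNReal.toReal_nonneg (a := ∫⁻ a, ENNReal.ofReal (-g a) ∂m)]

lemma cr_fiber {P J : Type*} [MeasurableSpace P] [Fintype J] [DecidableEq J] [MeasurableSpace J]
    [MeasurableSingletonClass J] (ν : Measure P) (f : P → ℝ) (hf : Integrable f ν)
    (c : P → J) (hc : Measurable c) (h : J → ℝ) :
    ∫ p, f p * h (c p) ∂ν = ∑ j, (∫ p in c ⁻¹' {j}, f p ∂ν) * h j := by
  have e : ∀ p, f p * h (c p) = ∑ j, (c ⁻¹' {j}).indicator f p * h j := by
    intro p
    rw [Finset.sum_eq_single (c p)]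
    · simp
    · intro j _ hj
      rw [Set.indicator_of_notMem]
      · simp
      · simpa using hj.symm
    · simp
  simp_rw [e]
  rw [integral_finsetSum]
  · refine Finset.sum_congr rfl fun j _ => ?_
    rw [integral_mul_const, integral_indicator (hc (measurableSet_singleton j))]
  · intro j _
    exact (hf.indicator (hc (measurableSet_singleton j))).mul_const _

lemma cr_abs {P J : Type*} [MeasurableSpace P] [Fintype J] [DecidableEq J] [MeasurableSpace J]
    [MeasurableSingletonClass J] (ν : Measure P) [IsProbabilityMeasure ν] (f r : P → ℝ)
    (hf : Integrable f ν) (hr : Measurable r)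
    (c : P → J) (hc : Measurable c) (t : J → ℝ) (ht : ∀ j, 0 ≤ t j ∧ t j ≤ 1) (n : ℕ)
    (vhat : (Fin n → P × ℝ) → ℝ) (hv : Measurable vhat) (S : ℝ≥0∞)
    (hS : ∀ B : Set P, MeasurableSet B →
      ∫⁻ p : Fin n → P, ENNReal.ofReal
        ((vhat (fun i => (p i, B.indicator r (p i))) - ∫ x in B, f x ∂ν) ^ 2)
        ∂(Measure.pi fun _ : Fin n => ν) ≤ S) :
    ENNReal.ofReal ((∫ p, f p * t (c p) ∂ν) ^ 2 / 8 * (1 - n * ∫ p, t (c p) ^ 2 ∂ν) -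
      1 / 4 * ∑ j, (∫ p in c ⁻¹' {j}, f p ∂ν) ^ 2) ≤ S := by
  set a : J → ℝ := fun j => ∫ p in c ⁻¹' {j}, f p ∂ν with ha
  set m := Measure.pi fun _ : Fin n => ν with hm
  set B : (J → Bool) → Set P := fun ω => c ⁻¹' {j | ω j = true} with hB
  have hBm : ∀ ω, MeasurableSet (B ω) := fun ω => hc (Set.toFinite _).measurableSet
  have hvB : ∀ ω, ∫ x in B ω, f x ∂ν = ∑ j, a j * crb (ω j) := by
    intro ω
    rw [← cr_fiber ν f hf c hc (fun j => crb (ω j)), ← integral_indicator (hBm ω)]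
    congr 1
    funext p
    by_cases h : ω (c p) = true <;> simp [hB, crb, h]
  set w : (J → Bool) → ℝ := fun ω =>
    ((∏ j, crw ((1 - t j) / 2) (ω j)) + (∏ j, crw ((1 + t j) / 2) (ω j))) / 2 with hw
  have hw0 : ∀ ω, 0 ≤ w ω := by
    intro ω
    have h0 := cr_w_nonneg (fun j => (1 - t j) / 2)
      (fun j => ⟨by linarith [(ht j).2], by linarith [(ht j).1]⟩) ω
    have h1 := cr_w_nonneg (fun j => (1 + t j) / 2)
      (fun j => ⟨by linarith [(ht j).1], by linarith [(ht j).2]⟩) ω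
    simp only [hw]; linarith
  have hw1 : ∑ ω, w ω = 1 := by
    simp only [hw]
    rw [← Finset.sum_div, Finset.sum_add_distrib, cr_sum_w, cr_sum_w]; norm_num
  set L : (J → Bool) → (Fin n → P) → ℝ := fun ω p =>
    (vhat (fun i => (p i, (B ω).indicator r (p i))) - ∫ x in B ω, f x ∂ν) ^ 2 with hL
  have hLm : ∀ ω, Measurable (L ω) := by
    intro ω
    have : Measurable fun p : Fin n → P => (fun i => (p i, (B ω).indicator r (p i))) := by
      apply measurable_pi_lambda
      intro i
      exact (measurable_pi_apply i).prodMk ((hr.indicator (hBm ω)).comp (measurable_pi_apply i))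
    exact ((hv.comp this).sub_const _).pow_const 2
  have h1 : ∑ ω, ENNReal.ofReal (w ω) * ∫⁻ p, ENNReal.ofReal (L ω p) ∂m ≤ S := by
    calc ∑ ω, ENNReal.ofReal (w ω) * ∫⁻ p, ENNReal.ofReal (L ω p) ∂m
        ≤ ∑ ω, ENNReal.ofReal (w ω) * S := by
          refine Finset.sum_le_sum fun ω _ => ?_
          gcongr
          exact hS (B ω) (hBm ω)
      _ = S := by
          rw [← Finset.sum_mul, ← ENNReal.ofReal_sum_of_nonneg (fun ω _ => hw0 ω), hw1]; simp
  have h2 : ∑ ω, ENNReal.ofReal (w ω) * ∫⁻ p, ENNReal.ofReal (L ω p) ∂m =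
      ∫⁻ p, ENNReal.ofReal (∑ ω, w ω * L ω p) ∂m := by
    simp_rw [← lintegral_const_mul _ (hLm _).ennreal_ofReal]
    rw [← lintegral_finsetSum _ (fun ω _ => (hLm ω).ennreal_ofReal.const_mul _)]
    congr 1
    funext p
    rw [ENNReal.ofReal_sum_of_nonneg (fun ω _ => mul_nonneg (hw0 ω) (sq_nonneg _))]
    refine Finset.sum_congr rfl fun ω _ => ?_
    rw [ENNReal.ofReal_mul (hw0 ω)]
  rw [h2] at h1
  refine le_trans ?_ h1
  set G : (Fin n → P) → ℝ := fun p =>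
    (∑ j, a j * t j) ^ 2 / 8 * (1 - ∑ i, t (c (p i)) ^ 2) - 1 / 4 * ∑ j, a j ^ 2 with hG
  have htm : Measurable fun p => t (c p) ^ 2 := ((measurable_of_finite t).comp hc).pow_const 2
  have hti : Integrable (fun p => t (c p) ^ 2) ν := by
    refine Integrable.of_bound htm.aestronglyMeasurable 1 (Filter.Eventually.of_forall fun p => ?_)
    rw [Real.norm_eq_abs, abs_of_nonneg (sq_nonneg _)]
    nlinarith [(ht (c p)).1, (ht (c p)).2]
  have hsi : ∀ i ∈ Finset.univ, Integrable (fun p : Fin n → P => t (c (p i)) ^ 2) m :=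
    fun i _ => integrable_comp_eval (μ := fun _ : Fin n => ν) (i := i) hti
  have hGi : Integrable G m := by
    have := integrable_finsetSum Finset.univ hsi
    exact (((integrable_const (1 : ℝ)).sub this).const_mul _).sub (integrable_const _)
  have hGint : ∫ p, G p ∂m = (∫ p, f p * t (c p) ∂ν) ^ 2 / 8 * (1 - n * ∫ p, t (c p) ^ 2 ∂ν) -
      1 / 4 * ∑ j, a j ^ 2 := by
    have hs := integrable_finsetSum Finset.univ hsi
    have hs1 : Integrable (fun p : Fin n → P => 1 - ∑ i, t (c (p i)) ^ 2) m :=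
      (integrable_const (1 : ℝ)).sub hs
    simp only [hG]
    rw [integral_sub (hs1.const_mul _) (integrable_const _),
      integral_const_mul, integral_sub (integrable_const _) hs, integral_finsetSum _ hsi,
      cr_fiber ν f hf c hc t]
    have : ∀ i : Fin n, ∫ p, t (c (p i)) ^ 2 ∂m = ∫ p, t (c p) ^ 2 ∂ν := fun i =>
      integral_comp_eval (μ := fun _ : Fin n => ν) (i := i) (f := fun p => t (c p) ^ 2)
        htm.aestronglyMeasurable
    simp_rw [this]
    simp [ha]
  rw [← hGint]
  refine (cr_ofReal_integral_le m G hGi).trans (lintegral_mono fun p => ENNReal.ofReal_le_ofReal ?_)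
  have hp := cr_pointwise (Finset.univ.image fun i => c (p i)) t a ht
    (fun ω => vhat (fun i => (p i, (B ω).indicator r (p i)))) (by
      intro ω ω' h
      have : ∀ i, (B ω).indicator r (p i) = (B ω').indicator r (p i) := by
        intro i
        have := h (c (p i)) (Finset.mem_image_of_mem _ (Finset.mem_univ i))
        simp [hB, Set.indicator, this]
      simp only [this])
  simp only [← hvB] at hp
  refine le_trans ?_ hp
  have := cr_sum_image_le (fun i => c (p i)) (fun j => t j ^ 2) (fun j => sq_nonneg _)
  have h8 : 0 ≤ (∑ j, a j * t j) ^ 2 / 8 := by positivity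
  simp only [hG]
  nlinarith [mul_le_mul_of_nonneg_left this h8]

lemma cr_diag {P : Type*} [MeasurableSpace P] [MeasurableSingletonClass P] (ν : Measure P)
    [IsProbabilityMeasure ν] (f : P → ℝ)
    (hf : Integrable f ν) (hf2 : Integrable (fun p => f p ^ 2) ν)
    (γ : ℝ) (hγ : ∀ p, f p ≠ 0 → ν.real {p} ≤ γ)
    (b : P → ℕ → Bool) (hb : Measurable b) (hbi : Function.Injective b) (η : ℝ) (hη : 0 < η) :
    ∃ k : ℕ, ∫ z in {z : P × P | ∀ i < k, b z.1 i = b z.2 i}, f z.1 * f z.2 ∂(ν.prod ν) ≤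
      γ * ∫ p, f p ^ 2 ∂ν + η := by
  set E : ℕ → Set (P × P) := fun k => {z : P × P | ∀ i < k, b z.1 i = b z.2 i} with hE
  have hEm : ∀ k, MeasurableSet (E k) := by
    intro k
    have : E k = ⋂ i, ⋂ (_ : i < k), {z : P × P | b z.1 i = b z.2 i} := by
      ext z; simp [hE]
    rw [this]
    refine MeasurableSet.iInter fun i => MeasurableSet.iInter fun _ => ?_
    exact measurableSet_eq_fun ((measurable_pi_apply i).comp (hb.comp measurable_fst))
      ((measurable_pi_apply i).comp (hb.comp measurable_snd))
  have hanti : Antitone E := fun k l hkl z hz i hi => hz i (hi.trans_le hkl)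
  have hff : Integrable (fun z : P × P => f z.1 * f z.2) (ν.prod ν) := hf.mul_prod hf
  have ht := tendsto_setIntegral_of_antitone hEm hanti ⟨0, hff.integrableOn⟩
  have hD : ⋂ k, E k = {z : P × P | z.1 = z.2} := by
    ext z
    simp only [hE, Set.mem_iInter, Set.mem_ofPred_eq]
    constructor
    · intro h
      exact hbi (funext fun i => h (i + 1) i (Nat.lt_succ_self i))
    · intro h k i _
      rw [h]
  have hDm : MeasurableSet {z : P × P | z.1 = z.2} := hD ▸ MeasurableSet.iInter hEm
  have hlim : ∫ z in ⋂ k, E k, f z.1 * f z.2 ∂(ν.prod ν) ≤ γ * ∫ p, f p ^ 2 ∂ν := by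
    rw [hD, ← integral_indicator hDm, integral_prod _ (hff.indicator hDm), ← integral_const_mul]
    refine integral_mono (hff.indicator hDm).integral_prod_left (hf2.const_mul γ) fun p => ?_
    have e : ∀ y, ({z : P × P | z.1 = z.2}.indicator (fun z => f z.1 * f z.2) (p, y)) =
        ({p} : Set P).indicator (fun y => f p * f p) y := by
      intro y
      by_cases h : p = y
      · subst h; simp
      · simp [h, Ne.symm h]
    simp only [e]
    rw [integral_indicator (measurableSet_singleton p)]
    simp only [integral_const, smul_eq_mul, measureReal_restrict_apply_univ]
    by_cases h : f p = 0
    · simp [h]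
    · nlinarith [mul_le_mul_of_nonneg_right (hγ p h) (sq_nonneg (f p))]
  have hlt : ∫ z in ⋂ k, E k, f z.1 * f z.2 ∂(ν.prod ν) < γ * ∫ p, f p ^ 2 ∂ν + η := by linarith
  obtain ⟨k, hk⟩ := (ht.eventually (gt_mem_nhds hlt)).exists
  exact ⟨k, hk.le⟩

lemma cr_cells {P J : Type*} [MeasurableSpace P] [Fintype J] [DecidableEq J] [MeasurableSpace J]
    [MeasurableSingletonClass J] (ν : Measure P)
    [IsProbabilityMeasure ν] (f : P → ℝ) (hf0 : ∀ p, 0 ≤ f p)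
    (hf : Integrable f ν) (c : P → J) (hc : Measurable c) (E : Set (P × P)) (hEm : MeasurableSet E)
    (hcE : ∀ z : P × P, c z.1 = c z.2 → z ∈ E) :
    ∑ j, (∫ p in c ⁻¹' {j}, f p ∂ν) ^ 2 ≤ ∫ z in E, f z.1 * f z.2 ∂(ν.prod ν) := by
  have hff : Integrable (fun z : P × P => f z.1 * f z.2) (ν.prod ν) := hf.mul_prod hf
  have h1 : ∀ j, (∫ p in c ⁻¹' {j}, f p ∂ν) ^ 2 =
      ∫ z, ((c ⁻¹' {j}) ×ˢ (c ⁻¹' {j})).indicator (fun z : P × P => f z.1 * f z.2) z ∂(ν.prod ν) := by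
    intro j
    have hj := hc (measurableSet_singleton j)
    rw [integral_indicator (hj.prod hj), setIntegral_prod_mul, sq]
  simp_rw [h1]
  have hi : ∀ j ∈ Finset.univ, Integrable (((c ⁻¹' {j}) ×ˢ (c ⁻¹' {j})).indicator
      (fun z : P × P => f z.1 * f z.2)) (ν.prod ν) := by
    intro j _
    have hj := hc (measurableSet_singleton j)
    exact hff.indicator (hj.prod hj)
  rw [← integral_finsetSum _ hi, ← integral_indicator hEm]
  refine integral_mono (integrable_finsetSum _ hi) (hff.indicator hEm) fun z => ?_
  have hz : 0 ≤ f z.1 * f z.2 := mul_nonneg (hf0 _) (hf0 _)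
  simp only
  by_cases h : c z.1 = c z.2
  · rw [Set.indicator_of_mem (hcE z h), Finset.sum_eq_single (c z.1)]
    · rw [Set.indicator_of_mem]
      simp [h]
    · intro j _ hj
      rw [Set.indicator_of_notMem]
      simp [hj.symm]
    · simp
  · rw [Finset.sum_eq_zero]
    · exact Set.indicator_nonneg (fun z _ => mul_nonneg (hf0 _) (hf0 _)) z
    · intro j _
      rw [Set.indicator_of_notMem]
      simp only [Set.mem_prod, Set.mem_preimage, Set.mem_singleton_iff]
      rintro ⟨h1, h2⟩
      exact h (h1.trans h2.symm)

lemma cr_core {P : Type*} [MeasurableSpace P] [MeasurableSingletonClass P]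
    [MeasurableSpace.CountablySeparated P] (ν : Measure P) [IsProbabilityMeasure ν] (f r : P → ℝ)
    (hfm : Measurable f) (hf0 : ∀ p, 0 ≤ f p) (hr : Measurable r)
    (hf2 : Integrable (fun p => f p ^ 2) ν)
    (γ γ' : ℝ) (hγ : ∀ p, f p ≠ 0 → ν.real {p} ≤ γ) (hγ' : 0 < γ') (hγγ : γ ≤ γ')
    (n : ℕ) (hn : 0 < n) (V T VT : ℝ) (hV : V = ∫ p, f p ^ 2 ∂ν) (hV0 : 0 < V)
    (hT : T = √(n * V / 16)) (hVT : VT = ∫ p, (if T < f p then 0 else f p ^ 2) ∂ν) (hVT0 : 0 < VT)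
    (vhat : (Fin n → P × ℝ) → ℝ) (hv : Measurable vhat) (S : ℝ≥0∞)
    (hS : ∀ B : Set P, MeasurableSet B →
      ∫⁻ p : Fin n → P, ENNReal.ofReal
        ((vhat (fun i => (p i, B.indicator r (p i))) - ∫ x in B, f x ∂ν) ^ 2)
        ∂(Measure.pi fun _ : Fin n => ν) ≤ S) :
    ENNReal.ofReal (VT ^ 2 / (32 * Real.exp 1 * n * V) - 1 / 2 * γ' * V) ≤ S := by
  have hn' : (0 : ℝ) < n := by exact_mod_cast hn
  have hf : Integrable f ν := by
    refine ((integrable_const (1 : ℝ)).add hf2).mono' hfm.aestronglyMeasurable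
      (Filter.Eventually.of_forall fun p => ?_)
    simp only [Pi.add_apply, Real.norm_eq_abs, abs_of_nonneg (hf0 p)]
    nlinarith [sq_nonneg (f p - 1 / 2)]
  obtain ⟨b, hb, hbi⟩ := MeasurableSpace.measurable_injection_nat_bool_of_countablySeparated P
  obtain ⟨k, hk⟩ := cr_diag ν f hf hf2 γ hγ b hb hbi (γ' * V) (by positivity)
  have hT0 : 0 < T := by rw [hT]; positivity
  have hT2 : T ^ 2 = n * V / 16 := by rw [hT, Real.sq_sqrt (by positivity)]
  obtain ⟨N, hN⟩ := exists_nat_gt (3 * T / VT)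
  have hN0 : (0 : ℝ) < N := lt_trans (by positivity) hN
  have hN3 : T / N ≤ VT / 3 := by
    rw [div_lt_iff₀ hVT0] at hN
    rw [div_le_div_iff₀ hN0 (by norm_num)]
    linarith
  set M : ℕ := ⌊N * T⌋₊ with hM
  set g : P → ℝ := fun p => if T < f p then 0 else f p with hg
  have hgm : Measurable g :=
    Measurable.ite (measurableSet_lt measurable_const hfm) measurable_const hfm
  have hg0 : ∀ p, 0 ≤ g p := fun p => by simp only [hg]; split_ifs <;> simp [hf0 p]
  have hgT : ∀ p, g p ≤ T := fun p => by
    simp only [hg]; split_ifs with h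
    · exact hT0.le
    · exact not_lt.1 h
  have hgf : ∀ p, g p ≤ f p := fun p => by
    simp only [hg]; split_ifs with h
    · exact hf0 p
    · exact le_rfl
  have hg2 : ∀ p, (if T < f p then 0 else f p ^ 2) = g p ^ 2 := fun p => by
    simp only [hg]; split_ifs <;> simp
  have hlab : ∀ p, ⌊N * g p⌋₊ ≤ M := fun p => Nat.floor_le_floor (by
    exact mul_le_mul_of_nonneg_left (hgT p) hN0.le)
  set c : P → (Fin k → Bool) × Fin (M + 1) := fun p =>
    (fun i => b p i, ⟨⌊N * g p⌋₊, Nat.lt_succ_of_le (hlab p)⟩) with hc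
  have hcm : Measurable c := by
    refine Measurable.prodMk ?_ ?_
    · exact measurable_pi_lambda _ fun i => (measurable_pi_apply (i : ℕ)).comp hb
    · have h1 : Measurable fun p => ⌊N * g p⌋₊ := Nat.measurable_floor.comp (hgm.const_mul _)
      have h2 : Measurable fun p => Fin.ofNat (M + 1) ⌊N * g p⌋₊ := (measurable_from_nat (f := Fin.ofNat (M+1))).comp h1
      convert h2 using 2 with p
      ext
      simp [Fin.ofNat, Nat.mod_eq_of_lt (Nat.lt_succ_of_le (hlab p))]
  set ε : ℝ := √(1 / (2 * n * V)) with hε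
  have hε0 : 0 < ε := by rw [hε]; positivity
  have hε2 : ε ^ 2 = 1 / (2 * n * V) := by rw [hε, Real.sq_sqrt (by positivity)]
  set t : (Fin k → Bool) × Fin (M + 1) → ℝ := fun j => ε * ((j.2 : ℕ) / N) with ht
  have hεT : ε * T ≤ 1 := by
    have : (ε * T) ^ 2 = 1 / 32 := by
      rw [mul_pow, hε2, hT2]; field_simp; norm_num
    nlinarith [mul_pos hε0 hT0]
  have ht01 : ∀ j, 0 ≤ t j ∧ t j ≤ 1 := by
    intro j
    refine ⟨by positivity, le_trans ?_ hεT⟩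
    refine mul_le_mul_of_nonneg_left ?_ hε0.le
    rw [div_le_iff₀ hN0]
    have h1 : ((j.2 : ℕ) : ℝ) ≤ M := by exact_mod_cast Nat.lt_succ_iff.1 j.2.2
    have h2 : (M : ℝ) ≤ N * T := Nat.floor_le (by positivity)
    linarith
  have htu : ∀ p, t (c p) ≤ ε * g p := by
    intro p
    refine mul_le_mul_of_nonneg_left ?_ hε0.le
    rw [div_le_iff₀ hN0]
    have : ((⌊N * g p⌋₊ : ℕ) : ℝ) ≤ N * g p := Nat.floor_le (mul_nonneg hN0.le (hg0 p))
    simp only [hc]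
    linarith
  have htl : ∀ p, ε * (g p - 1 / N) ≤ t (c p) := by
    intro p
    refine mul_le_mul_of_nonneg_left ?_ hε0.le
    have : N * g p < ((⌊N * g p⌋₊ : ℕ) : ℝ) + 1 := Nat.lt_floor_add_one _
    simp only [hc]
    rw [sub_le_iff_le_add, ← add_div, le_div_iff₀ hN0]
    linarith
  have hmain := cr_abs ν f r hf hr c hcm t ht01 n vhat hv S hS
  refine le_trans (ENNReal.ofReal_le_ofReal ?_) hmain
  have htm : Measurable fun p => t (c p) := (measurable_of_finite t).comp hcm
  have hEm : MeasurableSet {z : P × P | ∀ i < k, b z.1 i = b z.2 i} := by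
    have : {z : P × P | ∀ i < k, b z.1 i = b z.2 i} =
        ⋂ i, ⋂ (_ : i < k), {z : P × P | b z.1 i = b z.2 i} := by
      ext z; simp
    rw [this]
    refine MeasurableSet.iInter fun i => MeasurableSet.iInter fun _ => ?_
    exact measurableSet_eq_fun ((measurable_pi_apply i).comp (hb.comp measurable_fst))
      ((measurable_pi_apply i).comp (hb.comp measurable_snd))
  have hcell := cr_cells ν f hf0 hf c hcm _ hEm (by
    intro z hz i hi
    exact congrFun (congrArg Prod.fst hz) ⟨i, hi⟩)
  have hgi : Integrable (fun p => g p ^ 2) ν := by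
    refine hf2.mono' (hgm.pow_const 2).aestronglyMeasurable (Filter.Eventually.of_forall fun p => ?_)
    rw [Real.norm_eq_abs, abs_of_nonneg (sq_nonneg _)]
    exact pow_le_pow_left₀ (hg0 p) (hgf p) 2
  have hfti : Integrable (fun p => f p * t (c p)) ν := by
    refine hf.mono' (hfm.mul htm).aestronglyMeasurable (Filter.Eventually.of_forall fun p => ?_)
    rw [Real.norm_eq_abs, abs_of_nonneg (mul_nonneg (hf0 p) (ht01 _).1)]
    exact mul_le_of_le_one_right (hf0 p) (ht01 _).2
  have hti : Integrable (fun p => t (c p) ^ 2) ν := by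
    refine Integrable.of_bound (htm.pow_const 2).aestronglyMeasurable 1
      (Filter.Eventually.of_forall fun p => ?_)
    rw [Real.norm_eq_abs, abs_of_nonneg (sq_nonneg _)]
    nlinarith [(ht01 (c p)).1, (ht01 (c p)).2]
  have hΔ : ε * (2 / 3 * VT) ≤ ∫ p, f p * t (c p) ∂ν := by
    have h1 : ∫ p, ε * (g p ^ 2 - T / N) ∂ν ≤ ∫ p, f p * t (c p) ∂ν := by
      refine integral_mono ((hgi.sub (integrable_const _)).const_mul _) hfti fun p => ?_
      simp only
      have e1 : g p * t (c p) ≤ f p * t (c p) := mul_le_mul_of_nonneg_right (hgf p) (ht01 _).1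
      have e2 := mul_le_mul_of_nonneg_left (htl p) (hg0 p)
      have e3 : ε * (g p / N) ≤ ε * (T / N) := mul_le_mul_of_nonneg_left
        (div_le_div_of_nonneg_right (hgT p) hN0.le) hε0.le
      have e4 : g p * (ε * (g p - 1 / N)) = ε * g p ^ 2 - ε * (g p / N) := by ring
      linarith [mul_sub ε (g p ^ 2) (T / N)]
    rw [integral_const_mul, integral_sub hgi (integrable_const _)] at h1
    simp only [integral_const, probReal_univ, one_smul] at h1
    simp_rw [hg2] at hVT
    rw [← hVT] at h1
    refine le_trans (mul_le_mul_of_nonneg_left ?_ hε0.le) h1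
    linarith
  have hI : n * ∫ p, t (c p) ^ 2 ∂ν ≤ 1 / 2 := by
    have h1 : ∫ p, t (c p) ^ 2 ∂ν ≤ ∫ p, ε ^ 2 * f p ^ 2 ∂ν := by
      refine integral_mono hti (hf2.const_mul _) fun p => ?_
      simp only
      rw [← mul_pow]
      exact pow_le_pow_left₀ (ht01 _).1
        ((htu p).trans (mul_le_mul_of_nonneg_left (hgf p) hε0.le)) 2
    rw [integral_const_mul, ← hV, hε2] at h1
    calc n * ∫ p, t (c p) ^ 2 ∂ν ≤ n * (1 / (2 * n * V) * V) := by gcongr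
      _ = 1 / 2 := by field_simp
  have hsq : 2 / 9 / (n * V) * VT ^ 2 ≤ (∫ p, f p * t (c p) ∂ν) ^ 2 := by
    refine le_trans (le_of_eq ?_) (pow_le_pow_left₀ (by positivity) hΔ 2)
    rw [mul_pow, hε2]; field_simp; norm_num
  have hA : VT ^ 2 / (32 * Real.exp 1 * n * V) ≤ 1 / 72 / (n * V) * VT ^ 2 := by
    have he : (9 / 4 : ℝ) ≤ Real.exp 1 := by linarith [Real.exp_one_gt_d9]
    rw [show 1 / 72 / (n * V) * VT ^ 2 = VT ^ 2 / (72 * (n * V)) by field_simp]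
    refine div_le_div_of_nonneg_left (by positivity) (by positivity) ?_
    nlinarith [mul_pos hn' hV0]
  have hB : (∫ p, f p * t (c p) ∂ν) ^ 2 / 8 * (1 / 2) ≤
      (∫ p, f p * t (c p) ∂ν) ^ 2 / 8 * (1 - n * ∫ p, t (c p) ^ 2 ∂ν) :=
    mul_le_mul_of_nonneg_left (by linarith) (by positivity)
  have hC : 1 / 72 / (n * V) * VT ^ 2 = (2 / 9 / (n * V) * VT ^ 2) / 16 := by ring
  have hD : γ * V ≤ γ' * V := mul_le_mul_of_nonneg_right hγγ hV0.le
  rw [← hV] at hk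
  linarith

section cr_bridge

lemma cr_ker_meas (μp : Policy X A) : Measurable fun x : X =>
    (Measure.sum fun a : A => ENNReal.ofReal (μp.prob x a) • Measure.dirac (x, a) :
      Measure (X × A)) := by
  refine Measure.measurable_of_measurable_coe _ fun s hs => ?_
  simp only [Measure.sum_apply _ hs, Measure.smul_apply, smul_eq_mul, tsum_fintype]
  refine Finset.measurable_sum _ fun a _ => ?_
  refine (μp.meas a).ennreal_ofReal.mul ?_
  have : Measurable fun x : X => Measure.dirac (x, a) :=
    Measure.measurable_dirac.comp measurable_prodMk_right
  exact (Measure.measurable_coe hs).comp this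

lemma cr_joint_lintegral (lam : Measure X) (μp : Policy X A) (F : X × A → ℝ≥0∞)
    (hF : Measurable F) :
    ∫⁻ p, F p ∂(Policy.joint lam μp) =
      ∫⁻ x, ∑ a, ENNReal.ofReal (μp.prob x a) * F (x, a) ∂lam := by
  unfold Policy.joint
  rw [Measure.lintegral_bind (cr_ker_meas μp).aemeasurable hF.aemeasurable]
  congr 1
  funext x
  rw [lintegral_sum_measure, tsum_fintype]
  refine Finset.sum_congr rfl fun a _ => ?_
  rw [lintegral_smul_measure, lintegral_dirac' _ hF, smul_eq_mul]

lemma cr_joint_prob (lam : Measure X) [IsProbabilityMeasure lam] (μp : Policy X A) :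
    IsProbabilityMeasure (Policy.joint lam μp) := by
  constructor
  rw [← lintegral_one, cr_joint_lintegral lam μp _ measurable_const]
  have : ∀ x, ∑ a, ENNReal.ofReal (μp.prob x a) * 1 = 1 := by
    intro x
    simp_rw [mul_one]
    rw [← ENNReal.ofReal_sum_of_nonneg (fun a _ => μp.nonneg x a), μp.sum_one]; simp
  simp_rw [this]
  simp

lemma cr_Emu_lintegral (lam : Measure X) (μp : Policy X A) (f : X × A → ℝ) (hf : Measurable f)
    (hf0 : ∀ p, 0 ≤ f p) :
    ∫⁻ p, ENNReal.ofReal (f p) ∂(Policy.joint lam μp) =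
      ∫⁻ x, ENNReal.ofReal (∑ a, μp.prob x a * f (x, a)) ∂lam := by
  rw [cr_joint_lintegral lam μp _ hf.ennreal_ofReal]
  congr 1
  funext x
  rw [ENNReal.ofReal_sum_of_nonneg (fun a _ => mul_nonneg (μp.nonneg x a) (hf0 _))]
  refine Finset.sum_congr rfl fun a _ => ?_
  rw [ENNReal.ofReal_mul (μp.nonneg x a)]

lemma cr_meas_sum (μp : Policy X A) (f : X × A → ℝ) (hf : Measurable f) :
    Measurable fun x => ∑ a, μp.prob x a * f (x, a) :=
  Finset.measurable_sum _ fun a _ => (μp.meas a).mul (hf.comp measurable_prodMk_right)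

lemma cr_Emu (lam : Measure X) (μp : Policy X A) (f : X × A → ℝ) (hf : Measurable f)
    (hf0 : ∀ p, 0 ≤ f p) : Emu lam μp f = ∫ p, f p ∂(Policy.joint lam μp) := by
  unfold Emu
  rw [integral_eq_lintegral_of_nonneg_ae (Filter.Eventually.of_forall hf0) hf.aestronglyMeasurable,
    cr_Emu_lintegral lam μp f hf hf0, integral_eq_lintegral_of_nonneg_ae
      (Filter.Eventually.of_forall fun x => Finset.sum_nonneg fun a _ =>
        mul_nonneg (μp.nonneg x a) (hf0 _)) (cr_meas_sum μp f hf).aestronglyMeasurable]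

lemma cr_integrable (lam : Measure X) (μp : Policy X A) (f : X × A → ℝ) (hf : Measurable f)
    (hf0 : ∀ p, 0 ≤ f p) (hi : Integrable (fun x => ∑ a, μp.prob x a * f (x, a)) lam) :
    Integrable f (Policy.joint lam μp) := by
  refine ⟨hf.aestronglyMeasurable, ?_⟩
  rw [hasFiniteIntegral_iff_ofReal (Filter.Eventually.of_forall hf0),
    cr_Emu_lintegral lam μp f hf hf0,
    ← hasFiniteIntegral_iff_ofReal (Filter.Eventually.of_forall fun x =>
      Finset.sum_nonneg fun a _ => mul_nonneg (μp.nonneg x a) (hf0 _))]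
  exact hi.2

lemma cr_prob_meas (μp : Policy X A) : Measurable fun p : X × A => μp.prob p.1 p.2 :=
  measurable_from_prod_countable_left fun a => μp.meas a

lemma cr_impW_meas (μp πp : Policy X A) : Measurable (impW μp πp) :=
  (cr_prob_meas πp).div (cr_prob_meas μp)

lemma cr_impW_nonneg (μp πp : Policy X A) (p : X × A) : 0 ≤ impW μp πp p :=
  div_nonneg (πp.nonneg _ _) (μp.nonneg _ _)

lemma cr_atoms {P : Type*} [MeasurableSpace P] [MeasurableSingletonClass P] (ν : Measure P)
    [IsProbabilityMeasure ν] (g : ℝ≥0∞) : MeasurableSet {p | ν {p} ≤ g} := by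
  have h := Measure.countable_meas_pos_of_disjoint_iUnion (μ := ν) (As := fun p : P => ({p} : Set P))
    (fun p => measurableSet_singleton p) (fun p q hpq => by
      simpa [Function.onFun] using hpq)
  have h2 : {p | ν {p} ≤ g}ᶜ.Countable := h.mono fun p hp => by
    simp only [Set.mem_compl_iff, Set.mem_ofPred_eq, not_le] at hp ⊢
    exact lt_of_le_of_lt (zero_le) hp
  exact h2.measurableSet.of_compl

lemma cr_sample (lam : Measure X) (μp : Policy X A) (r : X × A → ℝ) (hr : Measurable r) :
    sampleMeasure lam μp (Kernel.deterministic r hr) =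
      (Policy.joint lam μp).map fun p => (p, r p) := by
  unfold sampleMeasure
  have hm : Measurable (fun p : X × A => (p, r p)) := measurable_id.prodMk hr
  rw [← Measure.bind_dirac_eq_map _ hm]
  congr 1
  funext p
  rw [Kernel.deterministic_apply, Measure.map_dirac' measurable_prodMk_left]

lemma cr_rstar (r : X × A → ℝ) (hr : Measurable r) (p : X × A) :
    rstar (Kernel.deterministic r hr) p = r p := by
  unfold rstar
  rw [Kernel.deterministic_apply, integral_dirac]

lemma cr_class (lam : Measure X) (μp : Policy X A) (σf Rmax : X × A → ℝ) (r : X × A → ℝ)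
    (hr : Measurable r) (h0 : ∀ p, 0 ≤ r p) (h1 : ∀ p, r p ≤ Rmax p) :
    InRewardClass lam μp σf Rmax (Kernel.deterministic r hr) := by
  refine ⟨inferInstance, fun p => ?_, Filter.Eventually.of_forall fun p => ⟨?_, ?_, ?_⟩⟩
  · rw [Kernel.deterministic_apply]
    exact integrable_dirac (by simp)
  · rw [cr_rstar]; exact h0 p
  · rw [cr_rstar]; exact h1 p
  · rw [Kernel.deterministic_apply, variance_dirac]; exact sq_nonneg _

lemma cr_vpi (lam : Measure X) (μp πp : Policy X A)
    (habs : ∀ x a, 0 < πp.prob x a → 0 < μp.prob x a) (r : X × A → ℝ)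
    (hr : Measurable r) (h0 : ∀ p, 0 ≤ r p) :
    vpi lam πp (Kernel.deterministic r hr) =
      ∫ p, impW μp πp p * r p ∂(Policy.joint lam μp) := by
  rw [← cr_Emu lam μp (fun p => impW μp πp p * r p) ((cr_impW_meas μp πp).mul hr)
    (fun p => mul_nonneg (cr_impW_nonneg μp πp p) (h0 p))]
  unfold vpi Emu
  congr 1
  funext x
  refine Finset.sum_congr rfl fun a _ => ?_
  rw [cr_rstar, ← mul_assoc]
  congr 1
  unfold impW
  by_cases h : μp.prob x a = 0
  · have : πp.prob x a = 0 := by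
      by_contra h'
      have := habs x a (lt_of_le_of_ne (πp.nonneg x a) (Ne.symm h'))
      exact this.ne' h
    simp [h, this]
  · simp only; field_simp

end cr_bridge

/-- Theorem 4: lower bound via context richness. -/
theorem minimax_lower_bound_context
    [StandardBorelSpace X]
    (lam : Measure X) [IsProbabilityMeasure lam] (μp πp : Policy X A)
    (habs : ∀ x a, 0 < πp.prob x a → 0 < μp.prob x a)
    (σf Rmax : X × A → ℝ) (hσm : Measurable σf) (hRm : Measurable Rmax)
    (hσnn : ∀ p, 0 ≤ σf p) (hRnn : ∀ p, 0 ≤ Rmax p)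
    (hfin : Integrable
      (fun x => ∑ a, μp.prob x a * (impW μp πp (x, a) ^ 2 * Rmax (x, a) ^ 2)) lam)
    (γ : ℝ) (hγ : γ ∈ Set.Icc (0 : ℝ) 1) (δ : ℝ) (hδ : δ ∈ Set.Ioc (0 : ℝ) 1)
    (ξ : X × A → ℝ)
    (hξ : ∀ p, ξ p = if Policy.joint lam μp {p} ≤ ENNReal.ofReal γ then 1 else 0)
    (γ' : ℝ) (hγ' : γ' = max γ δ) (n : ℕ) :
    ∃ Rhat rhohat : X × A → ℝ, Measurable Rhat ∧ Measurable rhohat ∧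
      (∀ p, 0 ≤ Rhat p) ∧ (∀ p, 0 ≤ rhohat p) ∧
      (∀ p, Rhat p ^ 2 ≤ Rmax p ^ 2 ∧ Rmax p ^ 2 ≤ (1 + δ) * Rhat p ^ 2) ∧
      (∀ p, rhohat p ^ 2 ≤ impW μp πp p ^ 2 ∧ impW μp πp p ^ 2 ≤ (1 + δ) * rhohat p ^ 2) ∧
      ENNReal.ofReal
        (Emu lam μp (fun p => ξ p * rhohat p ^ 2 * Rhat p ^ 2) / (32 * Real.exp 1 * n) *
          (1 - (Emu lam μp fun p =>
              if Real.sqrt (n * Emu lam μp (fun q => ξ q * rhohat q ^ 2 * Rhat q ^ 2) / 16)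
                  < ξ p * rhohat p * Rhat p
              then ξ p * rhohat p ^ 2 * Rhat p ^ 2 else 0)
            / Emu lam μp (fun p => ξ p * rhohat p ^ 2 * Rhat p ^ 2)) ^ 2
          - γ' * Real.log (5 / γ') * (1 + δ)
            * Emu lam μp (fun p => ξ p * rhohat p ^ 2 * Rhat p ^ 2))
        ≤ minimaxRisk lam μp πp σf Rmax n := by
  obtain ⟨hγ0, hγ1⟩ := hγ
  obtain ⟨hδ0, hδ1⟩ := hδ
  have hg0 : 0 < γ' := hγ' ▸ lt_max_of_lt_right hδ0
  have hg1 : γ' ≤ 1 := hγ' ▸ max_le hγ1 hδ1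
  have hγγ : γ ≤ γ' := hγ' ▸ le_max_left _ _
  have hlog : 1 ≤ Real.log (5 / γ') := by
    rw [Real.le_log_iff_exp_le (by positivity), le_div_iff₀ hg0]
    have := Real.exp_one_lt_d9
    nlinarith [Real.exp_pos 1]
  set ρ := impW μp πp with hρ
  have hρm : Measurable ρ := cr_impW_meas μp πp
  have hρ0 : ∀ p, 0 ≤ ρ p := cr_impW_nonneg μp πp
  refine ⟨Rmax, ρ, hRm, hρm, hRnn, hρ0, fun p => ⟨le_rfl, ?_⟩, fun p => ⟨le_rfl, ?_⟩, ?_⟩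
  · nlinarith [mul_nonneg hδ0.le (sq_nonneg (Rmax p))]
  · nlinarith [mul_nonneg hδ0.le (sq_nonneg (ρ p))]
  set ν := Policy.joint lam μp with hν
  haveI : IsProbabilityMeasure ν := cr_joint_prob lam μp
  have hξm : Measurable ξ := by
    have : ξ = fun p => if Policy.joint lam μp {p} ≤ ENNReal.ofReal γ then 1 else 0 := funext hξ
    rw [this]
    exact Measurable.ite (cr_atoms ν _) measurable_const measurable_const
  have hξ01 : ∀ p, ξ p = 0 ∨ ξ p = 1 := fun p => by rw [hξ]; split_ifs <;> simp
  have hξ0 : ∀ p, 0 ≤ ξ p := fun p => by rcases hξ01 p with h | h <;> simp [h]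
  have hξ1 : ∀ p, ξ p ≤ 1 := fun p => by rcases hξ01 p with h | h <;> simp [h]
  set f : X × A → ℝ := fun p => ξ p * ρ p * Rmax p with hf
  have hfm : Measurable f := (hξm.mul hρm).mul hRm
  have hf0 : ∀ p, 0 ≤ f p := fun p => mul_nonneg (mul_nonneg (hξ0 p) (hρ0 p)) (hRnn p)
  have hf2 : ∀ p, ξ p * ρ p ^ 2 * Rmax p ^ 2 = f p ^ 2 := fun p => by
    simp only [hf]
    rcases hξ01 p with h | h <;> simp [h] <;> ring
  have hF2 : Integrable (fun p => f p ^ 2) ν := by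
    have h1 : Integrable (fun p => ρ p ^ 2 * Rmax p ^ 2) ν :=
      cr_integrable lam μp (fun p => ρ p ^ 2 * Rmax p ^ 2)
        ((hρm.pow_const 2).mul (hRm.pow_const 2)) (fun p => by positivity) hfin
    refine h1.mono' (hfm.pow_const 2).aestronglyMeasurable (Filter.Eventually.of_forall fun p => ?_)
    rw [Real.norm_eq_abs, abs_of_nonneg (sq_nonneg _), ← hf2 p, mul_assoc]
    exact mul_le_of_le_one_left (by positivity) (hξ1 p)
  simp_rw [hf2]
  set V := Emu lam μp (fun p => f p ^ 2) with hVdef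
  have hV : V = ∫ p, f p ^ 2 ∂ν :=
    cr_Emu lam μp _ (hfm.pow_const 2) (fun p => sq_nonneg _)
  have hV0 : 0 ≤ V := hV ▸ integral_nonneg fun p => sq_nonneg _
  set T := √(n * V / 16) with hT
  change ENNReal.ofReal (V / (32 * Real.exp 1 * n) *
      (1 - (Emu lam μp fun p => if T < f p then f p ^ 2 else 0) / V) ^ 2
      - γ' * Real.log (5 / γ') * (1 + δ) * V) ≤ _
  set W := Emu lam μp (fun p => if T < f p then f p ^ 2 else 0) with hWdef
  have hms : MeasurableSet {p | T < f p} := measurableSet_lt measurable_const hfm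
  have hW : W = ∫ p, (if T < f p then f p ^ 2 else 0) ∂ν :=
    cr_Emu lam μp _ (Measurable.ite hms (hfm.pow_const 2) measurable_const)
      (fun p => by split_ifs <;> positivity)
  have hWi : Integrable (fun p => if T < f p then f p ^ 2 else 0) ν := by
    refine hF2.mono' (Measurable.ite hms (hfm.pow_const 2) measurable_const).aestronglyMeasurable
      (Filter.Eventually.of_forall fun p => ?_)
    split_ifs <;> simp [sq_nonneg]
  have hVT : V - W = ∫ p, (if T < f p then 0 else f p ^ 2) ∂ν := by
    rw [hV, hW, ← integral_sub hF2 hWi]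
    congr 1
    funext p
    split_ifs <;> simp
  have hVT0 : 0 ≤ V - W := by
    rw [hVT]
    exact integral_nonneg fun p => by simp only [Pi.zero_apply]; split_ifs <;> positivity
  have hpen : 1 / 2 * γ' * V ≤ γ' * Real.log (5 / γ') * (1 + δ) * V := by
    apply mul_le_mul_of_nonneg_right _ hV0
    have h1 : γ' * 1 ≤ γ' * Real.log (5 / γ') := mul_le_mul_of_nonneg_left hlog hg0.le
    nlinarith
  have hpen0 : 0 ≤ 1 / 2 * γ' * V := by positivity
  by_cases hcase : 0 < n ∧ 0 < V ∧ 0 < V - W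
  swap
  · have hz : V / (32 * Real.exp 1 * n) * (1 - W / V) ^ 2 = 0 := by
      by_cases h1 : V = 0
      · simp [h1]
      by_cases h2 : n = 0
      · simp [h2]
      have h3 : V - W = 0 := by
        by_contra h3
        exact hcase ⟨Nat.pos_of_ne_zero h2, lt_of_le_of_ne hV0 (Ne.symm h1),
          lt_of_le_of_ne hVT0 (Ne.symm h3)⟩
      have h4 : W = V := by linarith
      rw [h4, div_self h1]; simp
    rw [hz, ENNReal.ofReal_of_nonpos (by linarith)]
    exact zero_le
  obtain ⟨hn, hVp, hVTp⟩ := hcase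
  have hn' : (0 : ℝ) < n := by exact_mod_cast hn
  have hbd : V / (32 * Real.exp 1 * n) * (1 - W / V) ^ 2
      = (V - W) ^ 2 / (32 * Real.exp 1 * n * V) := by
    field_simp
  rw [hbd]
  refine le_trans (ENNReal.ofReal_le_ofReal (sub_le_sub_left hpen _)) ?_
  unfold _root_.minimaxRisk
  refine le_iInf₂ fun vhat hv => ?_
  set r : X × A → ℝ := fun p => ξ p * Rmax p with hr
  have hrm : Measurable r := hξm.mul hRm
  have hr0 : ∀ p, 0 ≤ r p := fun p => mul_nonneg (hξ0 p) (hRnn p)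
  refine cr_core ν f r hfm hf0 hrm hF2 γ γ' ?_ hg0 hγγ n hn V T (V - W) hV hVp hT hVT hVTp
    vhat hv _ ?_
  · intro p hp
    have h1 : ν {p} ≤ ENNReal.ofReal γ := by
      by_contra h
      apply hp
      have : ξ p = 0 := by rw [hξ, if_neg h]
      simp [hf, this]
    exact ENNReal.toReal_le_of_le_ofReal hγ0 h1
  · intro B hB
    have hrB : Measurable (B.indicator r) := hrm.indicator hB
    have hrB0 : ∀ p, 0 ≤ B.indicator r p := Set.indicator_nonneg fun p _ => hr0 p
    have hcl := cr_class lam μp σf Rmax (B.indicator r) hrB hrB0 (fun p => by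
      by_cases h : p ∈ B
      · simp only [h, Set.indicator_of_mem, hr]
        exact mul_le_of_le_one_left (hRnn p) (hξ1 p)
      · simp [h, hRnn p])
    refine le_trans (le_of_eq ?_) (le_iSup₂ (Kernel.deterministic (B.indicator r) hrB) hcl)
    rw [cr_sample, cr_vpi lam μp πp habs _ hrB hrB0]
    have hpm : Measurable fun p : X × A => (p, B.indicator r p) := measurable_id.prodMk hrB
    haveI : IsProbabilityMeasure (ν.map fun p => (p, B.indicator r p)) :=
      Measure.isProbabilityMeasure_map hpm.aemeasurable
    have hpi := Measure.pi_map_pi (μ := fun _ : Fin n => ν)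
      (f := fun (_ : Fin n) (p : X × A) => (p, B.indicator r p)) (fun _ => hpm.aemeasurable)
    have hvint : ∫ p, ρ p * B.indicator r p ∂ν = ∫ p in B, f p ∂ν := by
      rw [← integral_indicator hB]
      congr 1
      funext p
      by_cases h : p ∈ B
      · simp only [h, Set.indicator_of_mem, hr, hf]; ring
      · simp [h]
    rw [← hν, ← hρ, hvint, ← hpi, lintegral_map]
    · exact ((hv.sub_const _).pow_const 2).ennreal_ofReal
    · exact measurable_pi_lambda _ fun i => hpm.comp (measurable_pi_apply i)
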